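/- Let G be the Barnes G-function defined by G(z+1) := exp(-z·ζ'(0) - γz²/2 - (z²+z)/2) · ∏_{k=1}^∞ (1+z/k)^k · exp(-z + z²/(2k)). Then as x → ∞ along the positive reals, log G(x+1) = (x²/2 - 1/12)·log(x+1) - (3/4)x² - x/2 + 1/4 - x·ζ'(0) + ζ'(-1) - 1/(12(x+1)) + O(x^{-2}). -/

import Mathlib

open Filter Topology

noncomputable section

/-- The `k`-th factor (for `k ≥ 1`, indexed by `k-1 : ℕ`) of the Weierstrass product defining
the Barnes `G`-function: `(1 + z/k)^k · exp(-z + z²/(2k))`. -/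
def barnesTerm (z : ℂ) (k : ℕ) : ℂ :=
  (1 + z / ((k : ℂ) + 1)) ^ (k + 1) * Complex.exp (-z + z ^ 2 / (2 * ((k : ℂ) + 1)))

/-- The Barnes `G`-function, defined via
`G(z+1) = exp(-z·ζ'(0) - γz²/2 - (z²+z)/2) · ∏_{k=1}^∞ (1+z/k)^k · exp(-z + z²/(2k))`. -/
def BarnesG (w : ℂ) : ℂ :=
  Complex.exp (-(w - 1) * deriv riemannZeta 0 -
      (Real.eulerMascheroniConstant : ℂ) * (w - 1) ^ 2 / 2 - ((w - 1) ^ 2 + (w - 1)) / 2) *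
    ∏' k : ℕ, barnesTerm (w - 1) k

theorem em_step {E : Type*} [NormedAddCommGroup E] [NormedSpace ℝ E]
    (F f f1 f2 f3 f4 : ℝ → E) (a M : ℝ)
    (hF : ∀ t ∈ Set.Icc a (a + 1), HasDerivAt F (f t) t)
    (hf : ∀ t ∈ Set.Icc a (a + 1), HasDerivAt f (f1 t) t)
    (hf1 : ∀ t ∈ Set.Icc a (a + 1), HasDerivAt f1 (f2 t) t)
    (hf2 : ∀ t ∈ Set.Icc a (a + 1), HasDerivAt f2 (f3 t) t)
    (hf3 : ∀ t ∈ Set.Icc a (a + 1), HasDerivAt f3 (f4 t) t)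
    (hM : ∀ t ∈ Set.Icc a (a + 1), ‖f4 t‖ ≤ M) :
    ‖F (a + 1) - F a - (1 / 2 : ℝ) • (f a + f (a + 1)) + (1 / 12 : ℝ) • (f1 (a + 1) - f1 a)‖ ≤ M := by
  set P : ℝ → E := fun t => ((t - a) ^ 2 * (1 - (t - a)) ^ 2 / 24) • f3 t
      - (((t - a) * (1 - (t - a)) * (1 - 2 * (t - a))) / 12) • f2 t
      + ((1 - 6 * (t - a) + 6 * (t - a) ^ 2) / 12) • f1 t - ((t - a) - 1 / 2) • f t + F t with hP
  have hd : ∀ t ∈ Set.Icc a (a + 1),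
      HasDerivAt P (((t - a) ^ 2 * (1 - (t - a)) ^ 2 / 24) • f4 t) t := by
    intro t ht
    have hu : HasDerivAt (fun t : ℝ => t - a) 1 t := (hasDerivAt_id t).sub_const a
    have hv : HasDerivAt (fun t : ℝ => 1 - (t - a)) (-1) t := hu.const_sub 1
    have hw : HasDerivAt (fun t : ℝ => 1 - 2 * (t - a)) (-(2 * 1)) t := (hu.const_mul 2).const_sub 1
    have q3 := (((hu.pow 2).mul (hv.pow 2)).div_const 24).smul (hf3 t ht)
    have q2 := (((hu.mul hv).mul hw).div_const 12).smul (hf2 t ht)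
    have q1 := ((((hu.const_mul 6).const_sub 1).add ((hu.pow 2).const_mul 6)).div_const 12).smul
      (hf1 t ht)
    have q0 := (hu.sub_const (1 / 2)).smul (hf t ht)
    have := (((q3.sub q2).add q1).sub q0).add (hF t ht)
    refine this.congr_deriv ?_
    simp only [Pi.mul_apply, Pi.pow_apply, Pi.add_apply]
    norm_num
    module
  have h0 := norm_image_sub_le_of_norm_deriv_le_segment' (f := P) (a := a) (b := a + 1) (C := M)
    (fun t ht => (hd t ht).hasDerivWithinAt) (by
      intro t ht
      have ht' := Set.Ico_subset_Icc_self ht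
      have h1 : 0 ≤ t - a := by linarith [ht'.1]
      have h2 : 0 ≤ 1 - (t - a) := by linarith [ht'.2]
      have h3 : (t - a) ^ 2 ≤ 1 := by nlinarith
      have h4 : (1 - (t - a)) ^ 2 ≤ 1 := by nlinarith
      have h5 : (t - a) ^ 2 * (1 - (t - a)) ^ 2 / 24 ≤ 1 := by
        have := mul_le_mul h3 h4 (by positivity) (by norm_num)
        linarith
      rw [norm_smul, Real.norm_of_nonneg (by positivity)]
      calc _ ≤ 1 * ‖f4 t‖ := by gcongr
        _ ≤ M := by rw [one_mul]; exact hM t ht') (a + 1) (by constructor <;> linarith)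
  convert h0 using 1
  · congr 1
    simp only [hP]
    norm_num
    module
  · ring

/-- EM kernel -/
def emQ (a : ℝ) (s : ℂ) : ℂ :=
  -(a : ℂ) ^ (1 - s) + (s - 1) * (a : ℂ) ^ (-s) / 2 - (s - 1) * s * (a : ℂ) ^ (-s - 1) / 12

def emV (n : ℕ) (s : ℂ) : ℂ :=
  (s - 1) * (((n : ℝ) + 1 + 1 : ℝ) : ℂ) ^ (-s) - emQ ((n : ℝ) + 1 + 1) s + emQ ((n : ℝ) + 1) s

theorem cpow_hasDerivAt (c : ℂ) (t : ℝ) (ht : 0 < t) :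
    HasDerivAt (fun t : ℝ => (t : ℂ) ^ c) (c * (t : ℂ) ^ (c - 1)) t := by
  have h := (hasDerivAt_id (t : ℂ)).cpow_const (c := c) (by simp [Complex.mem_slitPlane_iff, ht])
  have := h.comp_ofReal
  simpa using this

theorem emV_bound (n : ℕ) (s : ℂ) (hs : s ∈ Metric.ball (1 : ℂ) (9 / 4)) :
    ‖emV n s‖ ≤ 3 * 4 * 5 * 6 * 7 * ((n : ℝ) + 1) ^ (-(11 / 4) : ℝ) := by
  have hs' : ‖s - 1‖ < 9 / 4 := by simpa [dist_eq_norm] using hs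
  have hre : -(5 / 4) < s.re := by
    have := (abs_lt.1 ((Complex.abs_re_le_norm (s - 1)).trans_lt hs')).1
    simp at this; linarith
  have hn : (0 : ℝ) < (n : ℝ) + 1 := by positivity
  have key := em_step (fun t : ℝ => -(t : ℂ) ^ (1 - s)) (fun t => (s - 1) * (t : ℂ) ^ (-s))
    (fun t => (s - 1) * ((-s) * (t : ℂ) ^ (-s - 1)))
    (fun t => (s - 1) * ((-s) * ((-s - 1) * (t : ℂ) ^ (-s - 1 - 1))))
    (fun t => (s - 1) * ((-s) * ((-s - 1) * ((-s - 1 - 1) * (t : ℂ) ^ (-s - 1 - 1 - 1)))))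
    (fun t => (s - 1) * ((-s) * ((-s - 1) * ((-s - 1 - 1) *
      ((-s - 1 - 1 - 1) * (t : ℂ) ^ (-s - 1 - 1 - 1 - 1))))))
    ((n : ℝ) + 1) (3 * 4 * 5 * 6 * 7 * ((n : ℝ) + 1) ^ (-(11 / 4) : ℝ))
    (by
      intro t ht
      have h0 : 0 < t := hn.trans_le ht.1
      refine (cpow_hasDerivAt (1 - s) t h0).neg.congr_deriv ?_
      rw [show 1 - s - 1 = -s by ring]; ring)
    (fun t ht => (cpow_hasDerivAt _ t (hn.trans_le ht.1)).const_mul _)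
    (fun t ht => ((cpow_hasDerivAt _ t (hn.trans_le ht.1)).const_mul _).const_mul _)
    (fun t ht => (((cpow_hasDerivAt _ t (hn.trans_le ht.1)).const_mul _).const_mul _).const_mul _)
    (fun t ht => ((((cpow_hasDerivAt _ t (hn.trans_le ht.1)).const_mul _).const_mul _).const_mul
      _).const_mul _)
    (by
      intro t ht
      have h0 : 0 < t := hn.trans_le ht.1
      have e1 : ‖(t : ℂ) ^ (-s - 1 - 1 - 1 - 1)‖ ≤ ((n : ℝ) + 1) ^ (-(11 / 4) : ℝ) := by
        rw [Complex.norm_cpow_eq_rpow_re_of_pos h0]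
        have h1 : 1 ≤ t := le_trans (by linarith [Nat.cast_nonneg (α := ℝ) n]) ht.1
        calc t ^ ((-s - 1 - 1 - 1 - 1).re) ≤ t ^ (-(11 / 4) : ℝ) := by
              apply Real.rpow_le_rpow_of_exponent_le h1
              simp; linarith
          _ ≤ _ := Real.rpow_le_rpow_of_nonpos hn ht.1 (by norm_num)
      have b0 : ‖s‖ ≤ 4 := by
        have := norm_add_le (s - 1) 1
        simp at this; linarith
      have b1 : ‖-s‖ ≤ 4 := by rwa [norm_neg]
      have b2 : ‖-s - 1‖ ≤ 5 := by
        have := norm_sub_le (-s) 1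
        simp at this b1; linarith
      have b3 : ‖-s - 1 - 1‖ ≤ 6 := by
        have := norm_sub_le (-s - 1) 1
        rw [norm_one] at this; linarith
      have b4 : ‖-s - 1 - 1 - 1‖ ≤ 7 := by
        have := norm_sub_le (-s - 1 - 1) 1
        rw [norm_one] at this; linarith
      simp only [norm_mul]
      calc _ ≤ 3 * (4 * (5 * (6 * (7 * ((n : ℝ) + 1) ^ (-(11 / 4) : ℝ))))) := by
            gcongr
            linarith
        _ = _ := by ring)
  rw [← norm_neg] at key
  refine le_trans (le_of_eq ?_) key
  congr 1
  simp only [Complex.real_smul, emV, emQ]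
  push_cast
  ring

theorem emQ_diff (a : ℝ) (ha : 0 < a) : Differentiable ℂ (emQ a) := by
  have : (a : ℂ) ≠ 0 := by exact_mod_cast ha.ne'
  unfold emQ
  have h : ∀ g : ℂ → ℂ, Differentiable ℂ g → Differentiable ℂ (fun s => (a : ℂ) ^ (g s)) :=
    fun g hg => hg.const_cpow (Or.inl this)
  have h1 := h (fun s => 1 - s) (by fun_prop)
  have h2 := h (fun s => - s) (by fun_prop)
  have h3 := h (fun s => - s - 1) (by fun_prop)
  fun_prop

theorem emV_diff (n : ℕ) : Differentiable ℂ (emV n) := by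
  unfold emV
  have hn : (0 : ℝ) < (n : ℝ) + 1 + 1 := by positivity
  have : (((n : ℝ) + 1 + 1 : ℝ) : ℂ) ≠ 0 := by exact_mod_cast hn.ne'
  have h1 := emQ_diff _ hn
  have h2 := emQ_diff ((n : ℝ) + 1) (by positivity)
  have h3 : Differentiable ℂ (fun s : ℂ => (((n : ℝ) + 1 + 1 : ℝ) : ℂ) ^ (-s)) :=
    (by fun_prop : Differentiable ℂ (fun s : ℂ => -s)).const_cpow (Or.inl this)
  fun_prop

theorem em_summable :
    Summable (fun n : ℕ => 3 * 4 * 5 * 6 * 7 * ((n : ℝ) + 1) ^ (-(11 / 4) : ℝ)) := by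
  apply Summable.mul_left
  have := (Real.summable_nat_rpow (p := -(11 / 4))).2 (by norm_num)
  have := (summable_nat_add_iff 1).2 this
  simpa using this

theorem zeta1_eq (s : ℂ) (hs : s ∈ Metric.ball (1 : ℂ) (9 / 4)) :
    riemannZeta₁ s = (s - 1) - emQ 1 s + ∑' n, emV n s := by
  have hdiff : DifferentiableOn ℂ (fun s => ∑' n, emV n s) (Metric.ball (1 : ℂ) (9 / 4)) :=
    Complex.differentiableOn_tsum_of_summable_norm em_summable (fun n => (emV_diff n).differentiableOn)
      Metric.isOpen_ball (fun n w hw => emV_bound n w hw)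
  have hQ := emQ_diff 1 one_pos
  have h1 : AnalyticOnNhd ℂ riemannZeta₁ (Metric.ball (1 : ℂ) (9 / 4)) :=
    differentiable_riemannZeta₁.differentiableOn.analyticOnNhd Metric.isOpen_ball
  have h2 : AnalyticOnNhd ℂ (fun s => (s - 1) - emQ 1 s + ∑' n, emV n s)
      (Metric.ball (1 : ℂ) (9 / 4)) := by
    refine DifferentiableOn.analyticOnNhd ?_ Metric.isOpen_ball
    exact DifferentiableOn.add (by fun_prop) hdiff
  have h2mem : (2 : ℂ) ∈ Metric.ball (1 : ℂ) (9 / 4) := by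
    rw [Metric.mem_ball, dist_eq_norm]; norm_num
  refine h1.eqOn_of_preconnected_of_eventuallyEq h2 (convex_ball _ _).isPreconnected h2mem ?_ hs
  have hopen : {s : ℂ | 1 < s.re} ∈ 𝓝 (2 : ℂ) :=
    (isOpen_lt continuous_const Complex.continuous_re).mem_nhds (by simp)
  filter_upwards [hopen, Metric.isOpen_ball.mem_nhds h2mem] with s hs1 hs2
  have hs1 : 1 < s.re := hs1
  have hne : s ≠ 1 := by rintro rfl; simp at hs1
  have hz : riemannZeta₁ s = (s - 1) * riemannZeta s := by
    rw [riemannZeta_eq_inv_sub_mul hne, ← mul_assoc, mul_inv_cancel₀ (sub_ne_zero.2 hne), one_mul]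
  rw [hz]
  have hsum : Summable (fun n => emV n s) :=
    Summable.of_norm_bounded em_summable (fun n => emV_bound n s hs2)
  have hT := hsum.hasSum.tendsto_sum_nat
  have hpart : ∀ N : ℕ, ∑ n ∈ Finset.range N, emV n s =
      (s - 1) * (∑ n ∈ Finset.range (N + 1), 1 / ((n : ℂ) + 1) ^ s) - (s - 1)
        - emQ ((N : ℝ) + 1) s + emQ 1 s := by
    intro N
    induction N with
    | zero => simp
    | succ N ih =>
      rw [Finset.sum_range_succ, ih, Finset.sum_range_succ _ (N + 1), emV]
      push_cast
      rw [Complex.cpow_neg]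
      ring
  have hzs : Summable (fun n : ℕ => 1 / ((n : ℂ) + 1) ^ s) := by
    have := (summable_nat_add_iff 1).2 (Complex.summable_one_div_nat_cpow.2 hs1)
    simpa using this
  have hzt := ((hzs.hasSum.tendsto_sum_nat).comp (tendsto_add_atTop_nat 1))
  rw [← zeta_eq_tsum_one_div_nat_add_one_cpow hs1] at hzt
  have hp : ∀ c : ℂ, c.re < 0 →
      Tendsto (fun N : ℕ => (((N : ℝ) + 1 : ℝ) : ℂ) ^ c) atTop (𝓝 0) := by
    intro c hc
    rw [tendsto_zero_iff_norm_tendsto_zero]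
    have e : ∀ N : ℕ, ‖(((N : ℝ) + 1 : ℝ) : ℂ) ^ c‖ = ((N : ℝ) + 1) ^ (-(-c.re)) := by
      intro N
      rw [Complex.norm_cpow_eq_rpow_re_of_pos (by positivity), neg_neg]
    simp only [e]
    exact (tendsto_rpow_neg_atTop (by linarith)).comp
      (tendsto_atTop_add_const_right _ 1 tendsto_natCast_atTop_atTop)
  have hQt : Tendsto (fun N : ℕ => emQ ((N : ℝ) + 1) s) atTop (𝓝 0) := by
    unfold emQ
    have a1 := (hp (1 - s) (by simp; linarith)).neg
    have a2 := ((hp (-s) (by simp; linarith)).const_mul (s - 1)).div_const 2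
    have a3 := ((hp (-s - 1) (by simp; linarith)).const_mul ((s - 1) * s)).div_const 12
    simpa using (a1.add a2).sub a3
  have hT2 : Tendsto (fun N => ∑ n ∈ Finset.range N, emV n s) atTop
      (𝓝 ((s - 1) * riemannZeta s - (s - 1) - 0 + emQ 1 s)) := by
    simp only [hpart]
    exact (((hzt.const_mul (s - 1)).sub_const _).sub hQt).add_const _
  rw [tendsto_nhds_unique hT hT2]
  ring

/-- derivative of `emQ a` at `-1`. -/
def emq (a : ℝ) : ℝ :=
  a ^ 2 * Real.log a + a / 2 + a * Real.log a + 1 / 4 + Real.log a / 6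

theorem emQ_deriv (a : ℝ) (ha : 0 < a) : HasDerivAt (emQ a) ((emq a : ℝ) : ℂ) (-1) := by
  have ha0 : (a : ℂ) ≠ 0 := by exact_mod_cast ha.ne'
  have hi := hasDerivAt_id (-1 : ℂ)
  have d1 := (hi.const_sub 1).const_cpow (c := (a : ℂ)) (Or.inl ha0)
  have d2 := (hi.neg).const_cpow (c := (a : ℂ)) (Or.inl ha0)
  have d3 := (hi.neg.sub_const 1).const_cpow (c := (a : ℂ)) (Or.inl ha0)
  have := (d1.neg.add (((hi.sub_const 1).mul d2).div_const 2)).sub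
    ((((hi.sub_const 1).mul hi).mul d3).div_const 12)
  refine this.congr_deriv ?_
  have e2 : (a : ℂ) ^ (1 - (-1) : ℂ) = (a : ℂ) ^ 2 := by
    rw [show (1 - (-1) : ℂ) = ((2 : ℕ) : ℂ) by norm_num, Complex.cpow_natCast]
  simp only [emq]
  push_cast
  rw [Complex.ofReal_log ha.le]
  simp
  norm_num [e2]
  ring

theorem emV_deriv (n : ℕ) : HasDerivAt (emV n)
    ((((n : ℝ) + 2) + 2 * (((n : ℝ) + 2) * Real.log ((n : ℝ) + 2)) - emq ((n : ℝ) + 2)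
      + emq ((n : ℝ) + 1) : ℝ) : ℂ) (-1) := by
  have hp : (0 : ℝ) < (n : ℝ) + 2 := by positivity
  have ha0 : (((n : ℝ) + 2 : ℝ) : ℂ) ≠ 0 := by exact_mod_cast hp.ne'
  have hi := hasDerivAt_id (-1 : ℂ)
  have d2 := (hi.neg).const_cpow (c := (((n : ℝ) + 2 : ℝ) : ℂ)) (Or.inl ha0)
  have := (((hi.sub_const 1).mul d2).sub (emQ_deriv _ hp)).add
    (emQ_deriv ((n : ℝ) + 1) (by positivity))
  have e : emV n = fun s => (s - 1) * (((n : ℝ) + 2 : ℝ) : ℂ) ^ (-s) - emQ ((n : ℝ) + 2) s +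
      emQ ((n : ℝ) + 1) s := by
    funext s
    rw [emV, show (n : ℝ) + 1 + 1 = (n : ℝ) + 2 by ring]
  rw [e]
  refine this.congr_deriv ?_
  have hl : ((Real.log ((n : ℝ) + 2) : ℝ) : ℂ) = Complex.log ((n : ℂ) + 2) := by
    rw [Complex.ofReal_log hp.le]; push_cast; rfl
  push_cast
  rw [hl]
  simp
  ring

theorem glaisher : Tendsto (fun N : ℕ => (((∑ k ∈ Finset.range (N + 1),
      ((k : ℝ) + 1) * Real.log ((k : ℝ) + 1)) - ((((N : ℝ) + 1) ^ 2 / 2) * Real.log ((N : ℝ) + 1)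
      + ((N : ℝ) + 1) / 2 * Real.log ((N : ℝ) + 1) + Real.log ((N : ℝ) + 1) / 12
      - ((N : ℝ) + 1) ^ 2 / 4 + 1 / 12) : ℝ) : ℂ)) atTop (𝓝 (- deriv riemannZeta (-1))) := by
  have hmem : (-1 : ℂ) ∈ Metric.ball (1 : ℂ) (9 / 4) := by
    rw [Metric.mem_ball, dist_eq_norm]; norm_num
  have hS := (Complex.hasSum_deriv_of_summable_norm em_summable (fun n => (emV_diff n).differentiableOn)
      Metric.isOpen_ball (fun n w hw => emV_bound n w hw) hmem).tendsto_sum_nat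
  have hdiff : DifferentiableOn ℂ (fun s => ∑' n, emV n s) (Metric.ball (1 : ℂ) (9 / 4)) :=
    Complex.differentiableOn_tsum_of_summable_norm em_summable (fun n => (emV_diff n).differentiableOn)
      Metric.isOpen_ball (fun n w hw => emV_bound n w hw)
  have hdt := (hdiff.differentiableAt (Metric.isOpen_ball.mem_nhds hmem)).hasDerivAt
  have hd1 : HasDerivAt riemannZeta₁ (1 - ((emq 1 : ℝ) : ℂ) +
      deriv (fun s => ∑' n, emV n s) (-1)) (-1) := by
    have := (((hasDerivAt_id (-1 : ℂ)).sub_const 1).sub (emQ_deriv 1 one_pos)).add hdt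
    refine this.congr_of_eventuallyEq ?_
    filter_upwards [Metric.isOpen_ball.mem_nhds hmem] with s hs
    exact zeta1_eq s hs
  have hd2 : HasDerivAt riemannZeta₁ (riemannZeta (-1) + (-2) * deriv riemannZeta (-1)) (-1) := by
    have hz := (differentiableAt_riemannZeta (s := -1) (by norm_num)).hasDerivAt
    have := ((hasDerivAt_id (-1 : ℂ)).sub_const 1).mul hz
    refine (this.congr_of_eventuallyEq ?_).congr_deriv ?_
    · filter_upwards [compl_singleton_mem_nhds (show (-1 : ℂ) ≠ 1 by norm_num)] with s hne
      simp only [Set.mem_compl_iff, Set.mem_singleton_iff] at hne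
      simp only [Pi.mul_apply, id]
      rw [riemannZeta_eq_inv_sub_mul hne, ← mul_assoc, mul_inv_cancel₀ (sub_ne_zero.2 hne), one_mul]
    · norm_num
  have hz1 : riemannZeta (-1) = -1 / 12 := by
    have := riemannZeta_neg_nat_eq_bernoulli 1
    simp at this
    rw [this]; norm_num
  have huniq := hd1.unique hd2
  rw [hz1] at huniq
  have hL : deriv (fun s => ∑' n, emV n s) (-1) =
     -1 / 12 + (-2) * deriv riemannZeta (-1) - 1 + ((emq 1 : ℝ) : ℂ) := by
    rw [← huniq]; ring
  rw [hL] at hS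
  have hpart : ∀ N : ℕ, ∑ n ∈ Finset.range N, deriv (emV n) (-1) =
      (((((N : ℝ) + 1) * ((N : ℝ) + 2) / 2 - 1 + 2 * ∑ k ∈ Finset.range (N + 1),
      ((k : ℝ) + 1) * Real.log ((k : ℝ) + 1)) - emq ((N : ℝ) + 1) + emq 1 : ℝ) : ℂ) := by
    intro N
    induction N with
    | zero => simp
    | succ N ih =>
      rw [Finset.sum_range_succ, ih, Finset.sum_range_succ _ (N + 1), (emV_deriv N).deriv]
      rw [← Complex.ofReal_add]
      congr 1
      push_cast
      rw [show (N : ℝ) + 1 + 1 = (N : ℝ) + 2 by ring]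
      ring
  simp only [hpart] at hS
  have h3 := ((hS.add_const (13 / 12 - ((emq 1 : ℝ) : ℂ))).div_const 2)
  convert h3 using 2
  · simp only [emq]
    push_cast
    ring
  · ring

theorem log_bound2 (u : ℝ) (hu : 0 ≤ u) : |Real.log (1 + u) - u + u ^ 2 / 2| ≤ u ^ 3 := by
  have := norm_image_sub_le_of_norm_deriv_le_segment' (a := 0) (b := u) (C := u ^ 2)
    (f := fun t => Real.log (1 + t) - t + t ^ 2 / 2) (f' := fun t => t ^ 2 / (1 + t))
    (by
      intro t ht
      have h0 : 1 + t ≠ 0 := by linarith [ht.1]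
      have h := ((((hasDerivAt_id t).const_add 1).log h0).sub (hasDerivAt_id t)).add
        (((hasDerivAt_id t).pow 2).div_const 2)
      refine (h.congr_deriv ?_).hasDerivWithinAt
      simp
      field_simp
      ring)
    (by
      intro t ht
      have h0 := ht.1
      have h1 := ht.2.le
      rw [Real.norm_of_nonneg (by positivity), div_le_iff₀ (by positivity)]
      nlinarith [mul_nonneg h0 (sq_nonneg u)]) u ⟨hu, le_rfl⟩
  simp at this
  calc _ ≤ u ^ 2 * u := this
    _ = _ := by ring

theorem log_bound3 (u : ℝ) (hu : 0 ≤ u) :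
    |Real.log (1 + u) - u + u ^ 2 / 2 - u ^ 3 / 3| ≤ u ^ 4 := by
  have := norm_image_sub_le_of_norm_deriv_le_segment' (a := 0) (b := u) (C := u ^ 3)
    (f := fun t => Real.log (1 + t) - t + t ^ 2 / 2 - t ^ 3 / 3) (f' := fun t => -(t ^ 3 / (1 + t)))
    (by
      intro t ht
      have h0 : 1 + t ≠ 0 := by linarith [ht.1]
      have h := (((((hasDerivAt_id t).const_add 1).log h0).sub (hasDerivAt_id t)).add
        (((hasDerivAt_id t).pow 2).div_const 2)).sub (((hasDerivAt_id t).pow 3).div_const 3)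
      refine (h.congr_deriv ?_).hasDerivWithinAt
      simp
      field_simp
      ring)
    (by
      intro t ht
      have h0 := ht.1
      have h1 := ht.2.le
      rw [norm_neg, Real.norm_of_nonneg (by positivity), div_le_iff₀ (by positivity)]
      have : t ^ 3 ≤ u ^ 3 := by gcongr
      have : 0 ≤ u ^ 3 * t := by positivity
      nlinarith) u ⟨hu, le_rfl⟩
  simp at this
  calc _ ≤ u ^ 3 * u := this
    _ = _ := by ring

def bc (x : ℝ) (k : ℕ) : ℝ :=
  ((k : ℝ) + 1) * Real.log (1 + x / ((k : ℝ) + 1)) - x + x ^ 2 / (2 * ((k : ℝ) + 1))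

theorem bc_summable (x : ℝ) (hx : 0 < x) : Summable (bc x) := by
  have hs : Summable (fun k : ℕ => x ^ 3 * (1 / ((k : ℝ) + 1) ^ 2)) := by
    apply Summable.mul_left
    have := (summable_nat_add_iff 1).2 (Real.summable_one_div_nat_pow.2 (one_lt_two))
    simpa using this
  refine Summable.of_norm_bounded hs (fun k => ?_)
  have hk : (0 : ℝ) < (k : ℝ) + 1 := by positivity
  have h := log_bound2 (x / ((k : ℝ) + 1)) (by positivity)
  have e : bc x k = ((k : ℝ) + 1) * (Real.log (1 + x / ((k : ℝ) + 1)) - x / ((k : ℝ) + 1)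
      + (x / ((k : ℝ) + 1)) ^ 2 / 2) := by
    unfold bc; field_simp
  rw [e, Real.norm_eq_abs, abs_mul, abs_of_pos hk]
  calc _ ≤ ((k : ℝ) + 1) * (x / ((k : ℝ) + 1)) ^ 3 := by gcongr
    _ = _ := by field_simp

theorem barnesTerm_eq (x : ℝ) (hx : 0 < x) (k : ℕ) :
    barnesTerm (x : ℂ) k = Complex.exp ((bc x k : ℝ) : ℂ) := by
  have hp : 0 < 1 + x / ((k : ℝ) + 1) := by positivity
  have h1 : (1 + (x : ℂ) / ((k : ℂ) + 1)) = Complex.exp ((Real.log (1 + x / ((k : ℝ) + 1)) : ℝ)) := by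
    rw [← Complex.ofReal_exp, Real.exp_log hp]; push_cast; rfl
  rw [barnesTerm, h1, ← Complex.exp_nat_mul, ← Complex.exp_add]
  congr 1
  unfold bc
  push_cast
  ring

theorem barnesG_eq (x : ℝ) (hx : 0 < x) : BarnesG ((x : ℂ) + 1) =
    Complex.exp (((x * (Real.log (2 * Real.pi) / 2) - Real.eulerMascheroniConstant * x ^ 2 / 2
      - (x ^ 2 + x) / 2 + ∑' k, bc x k : ℝ)) : ℂ) := by
  have h := ((Complex.hasSum_ofReal.2 (bc_summable x hx).hasSum)).cexp.tprod_eq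
  have h' : ∏' k : ℕ, barnesTerm (x : ℂ) k = Complex.exp ((∑' k, bc x k : ℝ) : ℂ) := by
    rw [← h]
    exact tprod_congr (fun k => barnesTerm_eq x hx k)
  rw [BarnesG, add_sub_cancel_right, h', ← Complex.exp_add, deriv_riemannZeta_zero]
  congr 1
  have hl : Complex.log (2 * (Real.pi : ℂ)) = ((Real.log (2 * Real.pi) : ℝ) : ℂ) := by
    rw [Complex.ofReal_log (by positivity)]; push_cast; rfl
  rw [hl]
  push_cast
  ring

/-- Real-part form of the Glaisher limit. -/
theorem zeta_neg_one_real : ∃ Z : ℝ, deriv riemannZeta (-1) = (Z : ℂ) ∧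
    Tendsto (fun N : ℕ => ((∑ k ∈ Finset.range N,
      ((k : ℝ) + 1) * Real.log ((k : ℝ) + 1)) - (((N : ℝ) ^ 2 / 2) * Real.log (N : ℝ)
      + (N : ℝ) / 2 * Real.log (N : ℝ) + Real.log (N : ℝ) / 12
      - (N : ℝ) ^ 2 / 4 + 1 / 12))) atTop (𝓝 (-Z)) := by
  have h := glaisher
  have hre := (Complex.continuous_re.tendsto _).comp h
  have him := (Complex.continuous_im.tendsto _).comp h
  refine ⟨(deriv riemannZeta (-1)).re, ?_, ?_⟩
  · apply Complex.ext
    · simp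
    · have h0 : Tendsto (fun _ : ℕ => (0 : ℝ)) atTop (𝓝 (-deriv riemannZeta (-1)).im) := by
        refine him.congr (fun N => ?_)
        simp only [Function.comp, Complex.ofReal_im]
      have := tendsto_nhds_unique h0 tendsto_const_nhds
      simpa using this
  · rw [← tendsto_add_atTop_iff_nat 1]
    rw [Complex.neg_re] at hre
    refine hre.congr (fun N => ?_)
    simp only [Function.comp, Complex.ofReal_re]
    push_cast
    rfl

theorem em_log_step (x : ℝ) (hx : 1 < x) (k : ℕ) :
    ‖(((k : ℝ) + 1) ^ 2 - x ^ 2) / 2 * Real.log ((k : ℝ) + 1 + x) - ((k : ℝ) + 1) ^ 2 / 4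
        + ((k : ℝ) + 1) * x / 2
      - (((k : ℝ) ^ 2 - x ^ 2) / 2 * Real.log ((k : ℝ) + x) - (k : ℝ) ^ 2 / 4 + (k : ℝ) * x / 2)
      - (1 / 2 : ℝ) • ((k : ℝ) * Real.log ((k : ℝ) + x)
        + ((k : ℝ) + 1) * Real.log ((k : ℝ) + 1 + x))
      + (1 / 12 : ℝ) • (Real.log ((k : ℝ) + 1 + x) + ((k : ℝ) + 1) / ((k : ℝ) + 1 + x)
        - (Real.log ((k : ℝ) + x) + (k : ℝ) / ((k : ℝ) + x)))‖ ≤ 8 / ((k : ℝ) + x) ^ 3 := by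
  have hk : (0 : ℝ) ≤ k := by positivity
  refine em_step (fun t => (t ^ 2 - x ^ 2) / 2 * Real.log (t + x) - t ^ 2 / 4 + t * x / 2)
    (fun t => t * Real.log (t + x)) (fun t => Real.log (t + x) + t / (t + x))
    (fun t => 1 / (t + x) + x / (t + x) ^ 2) (fun t => - 1 / (t + x) ^ 2 - 2 * x / (t + x) ^ 3)
    (fun t => 2 / (t + x) ^ 3 + 6 * x / (t + x) ^ 4) k (8 / ((k : ℝ) + x) ^ 3) ?_ ?_ ?_ ?_ ?_ ?_
  all_goals
    intro t ht
    have h0 : 0 ≤ t := hk.trans ht.1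
    have hp : 0 < t + x := by linarith
    have hne := hp.ne'
    have hi := hasDerivAt_id t
    have ha := hi.add_const x
    have hl := ha.log hne
    simp only [id] at ha hl
  · refine (((((hi.pow 2).sub_const (x ^ 2)).div_const 2).mul hl).sub
      ((hi.pow 2).div_const 4)).add ((hi.mul_const x).div_const 2) |>.congr_deriv ?_
    simp
    field_simp
    ring
  · refine (hi.mul hl).congr_deriv ?_
    simp
    ring
  · refine (hl.add (hi.div ha hne)).congr_deriv ?_
    simp
  · refine (((hasDerivAt_const t (1 : ℝ)).div ha hne).add
      ((hasDerivAt_const t x).div (ha.pow 2) (pow_ne_zero 2 hne))).congr_deriv ?_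
    simp
    field_simp
    ring
  · refine (((hasDerivAt_const t (-1 : ℝ)).div (ha.pow 2) (pow_ne_zero 2 hne)).sub
      ((hasDerivAt_const t (2 * x)).div (ha.pow 3) (pow_ne_zero 3 hne))).congr_deriv ?_
    simp
    field_simp
    ring
  · have hx0 : 0 < x := by linarith
    rw [Real.norm_of_nonneg (by positivity)]
    calc 2 / (t + x) ^ 3 + 6 * x / (t + x) ^ 4
        ≤ 2 / (t + x) ^ 3 + 6 * (t + x) / (t + x) ^ 4 := by gcongr; linarith
      _ = 8 / (t + x) ^ 3 := by field_simp; ring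
      _ ≤ _ := by gcongr; exact ht.1

theorem em_log_sum (x : ℝ) (hx : 1 < x) (N : ℕ) :
    |((N : ℝ) ^ 2 - x ^ 2) / 2 * Real.log ((N : ℝ) + x) - (N : ℝ) ^ 2 / 4 + (N : ℝ) * x / 2
      + x ^ 2 / 2 * Real.log x
      - ((∑ k ∈ Finset.range N, ((k : ℝ) + 1) * Real.log ((k : ℝ) + 1 + x))
          - (N : ℝ) * Real.log ((N : ℝ) + x) / 2)
      + (1 / 12 : ℝ) * (Real.log ((N : ℝ) + x) + (N : ℝ) / ((N : ℝ) + x) - Real.log x)|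
      ≤ 8 * (1 / (x - 1) ^ 2 - 1 / ((N : ℝ) + x - 1) ^ 2) := by
  induction N with
  | zero => simp; ring_nf
  | succ N ih =>
    have h := em_log_step x hx N
    have hb : 8 / ((N : ℝ) + x) ^ 3 ≤ 8 * (1 / ((N : ℝ) + x - 1) ^ 2 - 1 / ((N : ℝ) + x) ^ 2) := by
      have hy : 1 < (N : ℝ) + x := by linarith [Nat.cast_nonneg (α := ℝ) N]
      generalize (N : ℝ) + x = y at hy
      have h1 : 0 < y - 1 := by linarith
      have : 1 / (y - 1) ^ 2 - 1 / y ^ 2 = (2 * y - 1) / ((y - 1) ^ 2 * y ^ 2) := by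
        field_simp; ring
      rw [this, ← mul_div_assoc, div_le_div_iff₀ (by positivity) (by positivity)]
      have : (y - 1) ^ 2 ≤ (2 * y - 1) * y := by nlinarith
      have := mul_le_mul_of_nonneg_right this (show 0 ≤ 8 * y ^ 2 by positivity)
      nlinarith
    rw [Real.norm_eq_abs] at h
    rw [Finset.sum_range_succ]
    simp only [smul_eq_mul] at h
    push_cast
    rw [show (N : ℝ) + 1 + x - 1 = (N : ℝ) + x by ring]
    refine le_trans (le_of_eq ?_) ((abs_add_le _ _).trans ((add_le_add ih (h.trans hb)).trans
      (le_of_eq ?_)))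
    · congr 1; ring
    · ring

theorem limit_main (x Z : ℝ) (hx : 1 < x)
    (hZ : Tendsto (fun N : ℕ => ((∑ k ∈ Finset.range N,
      ((k : ℝ) + 1) * Real.log ((k : ℝ) + 1)) - (((N : ℝ) ^ 2 / 2) * Real.log (N : ℝ)
      + (N : ℝ) / 2 * Real.log (N : ℝ) + Real.log (N : ℝ) / 12
      - (N : ℝ) ^ 2 / 4 + 1 / 12))) atTop (𝓝 (-Z))) :
    |(-x ^ 2 / 4 + x / 2 + Real.eulerMascheroniConstant * x ^ 2 / 2 + x ^ 2 / 2 * Real.log x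
      - Real.log x / 12 + Z) - ∑' k, bc x k| ≤ 8 / (x - 1) ^ 2 := by
  have hx0 : 0 < x := by linarith
  have hsum := (bc_summable x hx0).hasSum.tendsto_sum_nat
  have hu : Tendsto (fun N : ℕ => (N : ℝ) * Real.log (1 + x / (N : ℝ))) atTop (𝓝 x) :=
    (Real.tendsto_mul_log_one_add_div_atTop x).comp tendsto_natCast_atTop_atTop
  have hinv : Tendsto (fun N : ℕ => ((N : ℝ))⁻¹) atTop (𝓝 0) :=
    tendsto_inv_atTop_zero.comp tendsto_natCast_atTop_atTop
  have hu0 : Tendsto (fun N : ℕ => Real.log (1 + x / (N : ℝ))) atTop (𝓝 0) := by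
    have := hu.mul hinv
    rw [mul_zero] at this
    refine this.congr' ?_
    filter_upwards [eventually_gt_atTop 0] with N hN
    have : (0 : ℝ) < N := by exact_mod_cast hN
    field_simp
  have hu2 : Tendsto (fun N : ℕ => (N : ℝ) ^ 2 * Real.log (1 + x / (N : ℝ)) - (N : ℝ) * x
      + x ^ 2 / 2) atTop (𝓝 0) := by
    have h3 := hinv.const_mul (x ^ 3)
    rw [mul_zero] at h3
    refine squeeze_zero_norm' ?_ h3
    filter_upwards [eventually_gt_atTop 0] with N hN
    have hN' : (0 : ℝ) < N := by exact_mod_cast hN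
    have h := log_bound2 (x / N) (by positivity)
    have e : (N : ℝ) ^ 2 * Real.log (1 + x / (N : ℝ)) - (N : ℝ) * x + x ^ 2 / 2 =
      (N : ℝ) ^ 2 * (Real.log (1 + x / (N : ℝ)) - x / N + (x / N) ^ 2 / 2) := by
      field_simp
    rw [e, Real.norm_eq_abs, abs_mul, abs_of_pos (by positivity)]
    calc _ ≤ (N : ℝ) ^ 2 * (x / N) ^ 3 := by gcongr
      _ = _ := by field_simp
  have hf : Tendsto (fun N : ℕ => (N : ℝ) / ((N : ℝ) + x)) atTop (𝓝 1) := by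
    have := ((hinv.const_mul x).const_add 1).inv₀ (by norm_num)
    simp only [mul_zero, add_zero, inv_one] at this
    refine this.congr' ?_
    filter_upwards [eventually_gt_atTop 0] with N hN
    have hN' : (0 : ℝ) < N := by exact_mod_cast hN
    field_simp
  have hH := Real.tendsto_harmonic_sub_log
  have hpart : ∀ N : ℕ, ∑ k ∈ Finset.range N, bc x k =
      (∑ k ∈ Finset.range N, ((k : ℝ) + 1) * Real.log ((k : ℝ) + 1 + x))
      - (∑ k ∈ Finset.range N, ((k : ℝ) + 1) * Real.log ((k : ℝ) + 1)) - N * x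
      + x ^ 2 / 2 * ((harmonic N : ℚ) : ℝ) := by
    intro N
    induction N with
    | zero => simp
    | succ N ih =>
      rw [Finset.sum_range_succ, ih, Finset.sum_range_succ, Finset.sum_range_succ, harmonic_succ]
      have hN : (0 : ℝ) < (N : ℝ) + 1 := by positivity
      have : Real.log (1 + x / ((N : ℝ) + 1)) =
          Real.log ((N : ℝ) + 1 + x) - Real.log ((N : ℝ) + 1) := by
        rw [← Real.log_div (by positivity) (by positivity)]
        congr 1
        field_simp
      rw [bc, this]
      push_cast
      field_simp
      ring
  have hlim := ((((((((hu2.const_mul (1 / 2)).add (hu.const_mul (1 / 2))).add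
    (hH.const_mul (x ^ 2 / 2))).sub (hu0.const_mul (x ^ 2 / 2))).add (hu0.const_mul (1 / 12))).add
    (hf.const_mul (1 / 12))).sub hZ).add_const
      (-x ^ 2 / 4 - 1 / 12 + x ^ 2 / 2 * Real.log x - Real.log x / 12)).sub hsum
  have hlim2 := hlim.abs
  refine le_trans (le_of_eq ?_) (le_of_tendsto hlim2 (b := 8 / (x - 1) ^ 2) ?_)
  · congr 1
    ring
  · filter_upwards [eventually_gt_atTop 0] with N hN
    have hN' : (0 : ℝ) < N := by exact_mod_cast hN
    have hlog : Real.log (1 + x / (N : ℝ)) = Real.log ((N : ℝ) + x) - Real.log (N : ℝ) := by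
      rw [← Real.log_div (by positivity) (by positivity)]
      congr 1
      field_simp
    have h := em_log_sum x hx N
    have h2 : 8 * (1 / (x - 1) ^ 2 - 1 / ((N : ℝ) + x - 1) ^ 2) ≤ 8 / (x - 1) ^ 2 := by
      have : 0 ≤ 1 / ((N : ℝ) + x - 1) ^ 2 := by positivity
      rw [div_eq_mul_one_div 8]
      linarith
    refine le_trans (le_of_eq ?_) (h.trans h2)
    rw [hpart, hlog]
    congr 1
    ring

theorem bracket_bound (x : ℝ) (hx : 1 ≤ x) :
    |x ^ 2 / 2 * Real.log x - 3 / 4 * x ^ 2 - Real.log x / 12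
      - ((x ^ 2 / 2 - 1 / 12) * Real.log (x + 1) - 3 / 4 * x ^ 2 - x / 2 + 1 / 4
            - 1 / (12 * (x + 1)))| ≤ 1 / x ^ 2 := by
  have hx0 : 0 < x := by linarith
  obtain ⟨v, hv⟩ : ∃ v, v = 1 / x := ⟨_, rfl⟩
  have hv0 : 0 < v := by rw [hv]; positivity
  have hv1 : v ≤ 1 := by rw [hv, div_le_one hx0]; exact hx
  have hxv : x * v = 1 := by rw [hv]; field_simp
  have hb := abs_le.1 (log_bound3 v hv0.le)
  have hlog : Real.log (x + 1) = Real.log x + Real.log (1 + v) := by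
    rw [← Real.log_mul (by positivity) (by positivity)]
    congr 1
    rw [mul_add, hxv]; ring
  rw [hlog]
  obtain ⟨r, hr⟩ : ∃ r, r = Real.log (1 + v) - v + v ^ 2 / 2 - v ^ 3 / 3 := ⟨_, rfl⟩
  have hw : Real.log (1 + v) = r + v - v ^ 2 / 2 + v ^ 3 / 3 := by rw [hr]; ring
  rw [← hr] at hb
  rw [hw]
  have h1 : 1 / (12 * (x + 1)) = v / 12 - v ^ 2 / 12 * (x / (x + 1)) := by
    rw [hv]; field_simp; ring
  obtain ⟨p, hp⟩ : ∃ p, p = x / (x + 1) := ⟨_, rfl⟩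
  have hp0 : 0 ≤ p := by rw [hp]; positivity
  have hp1 : p ≤ 1 := by rw [hp, div_le_one (by positivity)]; linarith
  have h2 : 1 / x ^ 2 = v ^ 2 := by rw [hv]; field_simp
  obtain ⟨r', hr'⟩ : ∃ r', r' = x ^ 2 * r := ⟨_, rfl⟩
  have hxx : x ^ 2 * v ^ 4 = v ^ 2 := by
    calc x ^ 2 * v ^ 4 = (x * v) ^ 2 * v ^ 2 := by ring
      _ = _ := by rw [hxv]; ring
  have hr'1 : r' ≤ v ^ 2 := by
    rw [hr', ← hxx]; exact mul_le_mul_of_nonneg_left hb.2 (by positivity)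
  have hr'2 : -(v ^ 2) ≤ r' := by
    rw [hr', ← hxx, ← mul_neg]; exact mul_le_mul_of_nonneg_left hb.1 (by positivity)
  rw [h1, h2, ← hp]
  have e : x ^ 2 / 2 * Real.log x - 3 / 4 * x ^ 2 - Real.log x / 12
      - ((x ^ 2 / 2 - 1 / 12) * (Real.log x + (r + v - v ^ 2 / 2 + v ^ 3 / 3)) - 3 / 4 * x ^ 2
        - x / 2 + 1 / 4 - (v / 12 - v ^ 2 / 12 * p)) =
      -r' / 2 + (r - v ^ 2 / 2 + v ^ 3 / 3) / 12 - v ^ 2 / 12 * p := by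
    have a1 : x ^ 2 * v = x := by
      calc x ^ 2 * v = x * (x * v) := by ring
        _ = x := by rw [hxv, mul_one]
    have a2 : x ^ 2 * v ^ 2 = 1 := by
      calc x ^ 2 * v ^ 2 = (x * v) ^ 2 := by ring
        _ = 1 := by rw [hxv, one_pow]
    have a3 : x ^ 2 * v ^ 3 = v := by
      calc x ^ 2 * v ^ 3 = (x * v) ^ 2 * v := by ring
        _ = v := by rw [hxv]; ring
    rw [hr']
    linear_combination (-1 / 2) * a1 + (1 / 4) * a2 - (1 / 6) * a3
  rw [e]
  have hv3 : v ^ 3 ≤ v ^ 2 := pow_le_pow_of_le_one hv0.le hv1 (by norm_num)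
  have hv4 : v ^ 4 ≤ v ^ 2 := pow_le_pow_of_le_one hv0.le hv1 (by norm_num)
  have hv30 : 0 ≤ v ^ 3 := by positivity
  have hv20 : 0 ≤ v ^ 2 := by positivity
  have hq0 : 0 ≤ v ^ 2 * p := by positivity
  have hq1 : v ^ 2 * p ≤ v ^ 2 := mul_le_of_le_one_right hv20 hp1
  rw [abs_le]
  constructor <;> linarith [hb.1, hb.2]

/-- Asymptotics of `log G(x+1)` as `x → ∞` along the positive reals:
`log G(x+1) = (x²/2 - 1/12)·log(x+1) - (3/4)x² - x/2 + 1/4 - x·ζ'(0) + ζ'(-1)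
  - 1/(12(x+1)) + O(x⁻²)`. -/
theorem barnesG_log_asymptotic :
    (fun x : ℝ => Complex.log (BarnesG ((x : ℂ) + 1)) -
        (((x ^ 2 / 2 - 1 / 12) * Real.log (x + 1) - 3 / 4 * x ^ 2 - x / 2 + 1 / 4
            - 1 / (12 * (x + 1)) : ℝ) : ℂ)
        + (x : ℂ) * deriv riemannZeta 0 - deriv riemannZeta (-1))
      =O[atTop] fun x : ℝ => x ^ (-2 : ℤ) := by
  obtain ⟨Z, hZ, hlim⟩ := zeta_neg_one_real
  refine Asymptotics.IsBigO.of_bound 33 ?_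
  filter_upwards [eventually_ge_atTop 2] with x hx
  have hx0 : 0 < x := by linarith
  have h1 := limit_main x Z (by linarith) hlim
  have h2 := bracket_bound x (by linarith)
  have hl : Complex.log (2 * (Real.pi : ℂ)) = ((Real.log (2 * Real.pi) : ℝ) : ℂ) := by
    rw [Complex.ofReal_log (by positivity)]; push_cast; rfl
  rw [barnesG_eq x hx0, ← Complex.ofReal_exp, ← Complex.ofReal_log (Real.exp_pos _).le,
    Real.log_exp, hZ, deriv_riemannZeta_zero, hl]
  rw [abs_sub_comm] at h1
  have h3 := (abs_add_le _ _).trans (add_le_add h1 h2)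
  have h4 : 8 / (x - 1) ^ 2 ≤ 32 * (1 / x ^ 2) := by
    have : 0 < x - 1 := by linarith
    rw [mul_one_div, div_le_div_iff₀ (by positivity) (by positivity)]
    nlinarith
  have h5 : ‖x ^ (-2 : ℤ)‖ = 1 / x ^ 2 := by
    rw [Real.norm_of_nonneg (by positivity), zpow_neg, one_div]
    norm_cast
  rw [h5]
  refine le_trans (le_of_eq ?_) (h3.trans (by linarith))
  rw [← Real.norm_eq_abs, ← Complex.norm_real]
  congr 1
  push_cast
  ring

end
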